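/- (Dominated convergence theorem for the Daniell extension.) Let (L, I) be an integral system on a set X, let (f_n) be a sequence in L¹ and g ∈ L¹ with |f_n| ≤ g pointwise for all n. Then the pointwise functions inf_{n≥1} f_n, sup_{n≥1} f_n, liminf_n f_n and limsup_n f_n all belong to L¹, and I¹(liminf_n f_n) ≤ liminf_n I¹(f_n) ≤ limsup_n I¹(f_n) ≤ I¹(limsup_n f_n). In particular, if f(x) = lim_n f_n(x) exists for every x ∈ X, then f ∈ L¹ and I¹(f) = lim_n I¹(f_n). -/

import Mathlib

open Filter Topology

/-- An integral system on a set `X`: a linear lattice `L` of real-valued functions on `X`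
(a vector subspace of `ℝ^X` closed under pointwise max and min) together with a
preintegral `I` on it (a positive linear functional that is continuous in the sense that
`I fₙ → 0` whenever `fₙ ∈ L` are nonnegative and decrease pointwise to `0`). -/
structure IntegralSystem (X : Type*) where
  L : Set (X → ℝ)
  I : (X → ℝ) → ℝ
  zero_mem : (0 : X → ℝ) ∈ L
  add_mem : ∀ ⦃f g : X → ℝ⦄, f ∈ L → g ∈ L → f + g ∈ L
  smul_mem : ∀ (c : ℝ) ⦃f : X → ℝ⦄, f ∈ L → c • f ∈ L
  sup_mem : ∀ ⦃f g : X → ℝ⦄, f ∈ L → g ∈ L → f ⊔ g ∈ L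
  inf_mem : ∀ ⦃f g : X → ℝ⦄, f ∈ L → g ∈ L → f ⊓ g ∈ L
  I_add : ∀ ⦃f g : X → ℝ⦄, f ∈ L → g ∈ L → I (f + g) = I f + I g
  I_smul : ∀ (c : ℝ) ⦃f : X → ℝ⦄, f ∈ L → I (c • f) = c * I f
  I_pos : ∀ ⦃f : X → ℝ⦄, f ∈ L → (∀ x, 0 ≤ f x) → 0 ≤ I f
  I_cont : ∀ f : ℕ → X → ℝ, (∀ n, f n ∈ L) → (∀ n x, 0 ≤ f n x) →
    (∀ n x, f (n + 1) x ≤ f n x) →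
    (∀ x, Tendsto (fun n => f n x) atTop (𝓝 0)) →
    Tendsto (fun n => I (f n)) atTop (𝓝 0)

variable {X : Type*}

/-- `f : X → (−∞,∞]` belongs to `L_↑` iff some sequence in `L` increases pointwise to `f`. -/
def MemLup (S : IntegralSystem X) (f : X → EReal) : Prop :=
  ∃ g : ℕ → X → ℝ, (∀ n, g n ∈ S.L) ∧ (∀ n x, g n x ≤ g (n + 1) x) ∧
    ∀ x, Tendsto (fun n => ((g n x : EReal))) atTop (𝓝 (f x))

/-- For `f ∈ L_↑`, `I_↑ f = lim I (g n)` for any sequence `(g n)` in `L` increasing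
pointwise to `f`; the value does not depend on the chosen sequence, so we may define it as
the supremum of all such limits. -/
noncomputable def Iup (S : IntegralSystem X) (f : X → EReal) : EReal :=
  sSup { c : EReal | ∃ g : ℕ → X → ℝ, (∀ n, g n ∈ S.L) ∧ (∀ n x, g n x ≤ g (n + 1) x) ∧
    (∀ x, Tendsto (fun n => ((g n x : EReal))) atTop (𝓝 (f x))) ∧
    Tendsto (fun n => ((S.I (g n) : EReal))) atTop (𝓝 c) }

/-- `L_↓ = −L_↑`. -/
def MemLdown (S : IntegralSystem X) (f : X → EReal) : Prop :=
  MemLup S (fun x => -(f x))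

/-- `I_↓ f = −I_↑(−f)`. -/
noncomputable def Idown (S : IntegralSystem X) (f : X → EReal) : EReal :=
  -(Iup S (fun x => -(f x)))

/-- The upper integral `Ī f = inf { I_↑ g : g ∈ L_↑, f ≤ g }` (with `inf ∅ = ∞`). -/
noncomputable def upperInt (S : IntegralSystem X) (f : X → EReal) : EReal :=
  sInf (Iup S '' { g | MemLup S g ∧ ∀ x, f x ≤ g x })

/-- The lower integral `I̲ f = sup { I_↓ g : g ∈ L_↓, g ≤ f }` (with `sup ∅ = −∞`). -/
noncomputable def lowerInt (S : IntegralSystem X) (f : X → EReal) : EReal :=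
  sSup (Idown S '' { g | MemLdown S g ∧ ∀ x, g x ≤ f x })

/-- `f : X → ℝ` is `I`-integrable iff its lower and upper integrals coincide and are finite. -/
def Integrable1 (S : IntegralSystem X) (f : X → ℝ) : Prop :=
  ∃ c : ℝ, lowerInt S (fun x => ((f x : EReal))) = (c : EReal) ∧
    upperInt S (fun x => ((f x : EReal))) = (c : EReal)

/-- The Daniell extension `I¹` of `I`: the common value of the lower and upper integrals of
an integrable function. -/
noncomputable def Int1 (S : IntegralSystem X) (f : X → ℝ) : ℝ :=
  (upperInt S (fun x => ((f x : EReal)))).toReal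

/-!
A majorant of `f` is an increasing sequence in `L` whose supremum dominates `f`; by a Dini
argument its integrals detect exactly the upper bounds of `Ī f`.  Hence `f` has integral `c` iff
`f` and `-f` have majorants with integrals bounded by numbers arbitrarily close to `c` and `-c`,
a criterion symmetric in `f ↔ -f`.  Splitting `u + v = u ⊔ v + u ⊓ v` along majorants makes `L¹`
a lattice, and countable subadditivity of majorants along the telescoping series
`p₀ + ∑ (pₙ₊₁ - pₙ)` gives monotone convergence.  Suprema are then increasing limits of finite
suprema, upper limits are decreasing limits of suprema of tails, and the remaining claims follow
by passing to negatives.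
-/

section Real

lemma hasSum_sub_of_monotone_of_tendsto {c : ℕ → ℝ} {C : ℝ} (hc : Monotone c)
    (hlim : Tendsto c atTop (𝓝 C)) : HasSum (fun n => c (n + 1) - c n) (C - c 0) := by
  rw [hasSum_iff_tendsto_nat_of_nonneg fun n => sub_nonneg.2 (hc n.le_succ)]
  simpa only [Finset.sum_range_sub] using hlim.sub_const (c 0)

-- For a family unbounded below both sides are the junk value `0`.
lemma iInf_eq_neg_iSup_neg {ι : Sort*} (a : ι → ℝ) : ⨅ i, a i = -⨆ i, -a i := by
  rw [iInf, iSup, ← Real.sInf_neg, ← Set.image_neg_eq_neg, ← Set.range_comp]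
  simp only [Function.comp_def, neg_neg]

lemma liminf_eq_neg_limsup_neg {ι : Type*} (a : ι → ℝ) (l : Filter ι) :
    liminf a l = -limsup (fun i => -a i) l := by
  rw [liminf_eq, limsup_eq, ← Real.sSup_neg]
  congr 1
  ext b
  simp

end Real

section Tails

variable {α : Type*} [ConditionallyCompleteLattice α] {a : ℕ → α}

lemma antitone_ciSup_nat_add (ha : BddAbove (Set.range a)) :
    Antitone fun k => ⨆ n, a (n + k) := by
  refine fun k l hkl => ciSup_le fun n => ?_
  have hbdd : BddAbove (Set.range fun n => a (n + k)) :=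
    ha.mono (Set.range_comp_subset_range (· + k) a)
  exact le_ciSup_of_le hbdd (n + (l - k)) (by rw [add_assoc, Nat.sub_add_cancel hkl])

lemma bddBelow_range_ciSup_nat_add (habove : BddAbove (Set.range a))
    (hbelow : BddBelow (Set.range a)) : BddBelow (Set.range fun k => ⨆ n, a (n + k)) := by
  obtain ⟨b, hb⟩ := hbelow
  refine ⟨b, Set.forall_mem_range.2 fun k => (hb ⟨0 + k, rfl⟩).trans ?_⟩
  exact le_ciSup (habove.mono (Set.range_comp_subset_range (· + k) a)) 0

lemma limsup_eq_ciInf_ciSup_nat_add (habove : BddAbove (Set.range a))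
    (hbelow : BddBelow (Set.range a)) : limsup a atTop = ⨅ k, ⨆ n, a (n + k) := by
  have hbdd (k : ℕ) : BddAbove (Set.range fun n => a (n + k)) :=
    habove.mono (Set.range_comp_subset_range (· + k) a)
  apply le_antisymm
  · refine le_ciInf fun k => limsup_le_of_le hbelow.isBoundedUnder_of_range.isCoboundedUnder_le ?_
    filter_upwards [eventually_ge_atTop k] with n hn
    exact le_ciSup_of_le (hbdd k) (n - k) (by rw [Nat.sub_add_cancel hn])
  · refine le_limsup_of_le habove.isBoundedUnder_of_range fun r hr => ?_
    obtain ⟨N, hN⟩ := eventually_atTop.1 hr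
    exact ciInf_le_of_le (bddBelow_range_ciSup_nat_add habove hbelow) N
      (ciSup_le fun n => hN (n + N) (Nat.le_add_left N n))

lemma tendsto_ciSup_nat_add_limsup [TopologicalSpace α] [InfConvergenceClass α]
    (habove : BddAbove (Set.range a)) (hbelow : BddBelow (Set.range a)) :
    Tendsto (fun k => ⨆ n, a (n + k)) atTop (𝓝 (limsup a atTop)) := by
  rw [limsup_eq_ciInf_ciSup_nat_add habove hbelow]
  exact tendsto_atTop_ciInf (antitone_ciSup_nat_add habove)
    (bddBelow_range_ciSup_nat_add habove hbelow)

end Tails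

namespace IntegralSystem

variable {S : IntegralSystem X} {f g : X → ℝ} {a b c d : ℝ}

section Preintegral

lemma neg_mem (hf : f ∈ S.L) : -f ∈ S.L := by
  simpa using S.smul_mem (-1) hf

lemma sub_mem (hf : f ∈ S.L) (hg : g ∈ S.L) : f - g ∈ S.L :=
  sub_eq_add_neg f g ▸ S.add_mem hf (neg_mem hg)

lemma sum_mem {ι : Type*} {u : ι → X → ℝ} (hu : ∀ i, u i ∈ S.L) (s : Finset ι) :
    ∑ i ∈ s, u i ∈ S.L :=
  Finset.sum_induction u (· ∈ S.L) (fun _ _ hf hg => S.add_mem hf hg) S.zero_mem fun i _ => hu i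

lemma I_zero (S : IntegralSystem X) : S.I 0 = 0 := by
  simpa using S.I_smul 0 S.zero_mem

lemma I_mono (hf : f ∈ S.L) (hg : g ∈ S.L) (hfg : f ≤ g) : S.I f ≤ S.I g := by
  have hadd := S.I_add hf (sub_mem hg hf)
  rw [add_sub_cancel] at hadd
  linarith [S.I_pos (sub_mem hg hf) fun x => sub_nonneg.2 (hfg x)]

lemma I_sum {ι : Type*} {u : ι → X → ℝ} (hu : ∀ i, u i ∈ S.L) (s : Finset ι) :
    S.I (∑ i ∈ s, u i) = ∑ i ∈ s, S.I (u i) := by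
  classical
  induction s using Finset.induction_on with
  | empty => simpa using S.I_zero
  | insert i s hi ih =>
    rw [Finset.sum_insert hi, Finset.sum_insert hi, S.I_add (hu i) (sum_mem hu s), ih]

end Preintegral

section Majorants

/-- `u` is an increasing sequence in `L` whose pointwise supremum, an element of `L_↑`, is at
least `f`.  The last condition is phrased without extended reals, as `f ≤ liminf u`. -/
structure IsMajorant (S : IntegralSystem X) (u : ℕ → X → ℝ) (f : X → ℝ) : Prop where
  mem : ∀ n, u n ∈ S.L
  monotone : Monotone u
  eventually_lt : ∀ x, ∀ r < f x, ∀ᶠ n in atTop, r < u n x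

/-- `f` is dominated by an element of `L_↑` whose integral `I_↑` is at most `a`. -/
def HasMajorant (S : IntegralSystem X) (f : X → ℝ) (a : ℝ) : Prop :=
  ∃ u, S.IsMajorant u f ∧ ∀ n, S.I (u n) ≤ a

namespace IsMajorant

variable {u v : ℕ → X → ℝ}

lemma const (hf : f ∈ S.L) : S.IsMajorant (fun _ => f) f where
  mem _ := hf
  monotone := monotone_const
  eventually_lt _ _ hr := .of_forall fun _ => hr

lemma mono (hu : S.IsMajorant u g) (hfg : f ≤ g) : S.IsMajorant u f where
  mem := hu.mem
  monotone := hu.monotone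
  eventually_lt x r hr := hu.eventually_lt x r (hr.trans_le (hfg x))

lemma sup (hu : S.IsMajorant u f) (hv : S.IsMajorant v g) :
    S.IsMajorant (fun n => u n ⊔ v n) (f ⊔ g) where
  mem n := S.sup_mem (hu.mem n) (hv.mem n)
  monotone := hu.monotone.sup hv.monotone
  eventually_lt x r hr := by
    rcases lt_sup_iff.1 hr with hr | hr
    · exact (hu.eventually_lt x r hr).mono fun n hn => hn.trans_le le_sup_left
    · exact (hv.eventually_lt x r hr).mono fun n hn => hn.trans_le le_sup_right

lemma inf (hu : S.IsMajorant u f) (hv : S.IsMajorant v g) :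
    S.IsMajorant (fun n => u n ⊓ v n) (f ⊓ g) where
  mem n := S.inf_mem (hu.mem n) (hv.mem n)
  monotone := hu.monotone.inf hv.monotone
  eventually_lt x r hr := by
    obtain ⟨hrf, hrg⟩ := lt_inf_iff.1 hr
    filter_upwards [hu.eventually_lt x r hrf, hv.eventually_lt x r hrg] with n hnu hnv
    exact lt_inf_iff.2 ⟨hnu, hnv⟩

lemma add (hu : S.IsMajorant u f) (hv : S.IsMajorant v g) :
    S.IsMajorant (fun n => u n + v n) (f + g) where
  mem n := S.add_mem (hu.mem n) (hv.mem n)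
  monotone := hu.monotone.add hv.monotone
  eventually_lt x r hr := by
    have hδ : 0 < (f x + g x - r) / 2 := half_pos (sub_pos.2 hr)
    filter_upwards [hu.eventually_lt x _ (sub_lt_self (f x) hδ),
      hv.eventually_lt x _ (sub_lt_self (g x) hδ)] with n hnu hnv
    rw [Pi.add_apply]
    linarith

lemma sum {ι : Type*} {u : ι → ℕ → X → ℝ} {f : ι → X → ℝ} (hu : ∀ i, S.IsMajorant (u i) (f i))
    (s : Finset ι) : S.IsMajorant (fun n => ∑ i ∈ s, u i n) (∑ i ∈ s, f i) := by
  classical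
  induction s using Finset.induction_on with
  | empty => simpa using const S.zero_mem
  | insert i s hi ih => simpa only [Finset.sum_insert hi] using (hu i).add ih

lemma tendsto_I_posPart_sub (hu : S.IsMajorant u f) (hf : f ∈ S.L) :
    Tendsto (fun n => S.I ((f - u n) ⊔ 0)) atTop (𝓝 0) := by
  refine S.I_cont _ (fun n => S.sup_mem (sub_mem hf (hu.mem n)) S.zero_mem)
    (fun n x => le_sup_right) (fun n x => ?_)
    fun x => tendsto_order.2 ⟨fun r hr => ?_, fun r hr => ?_⟩
  · exact sup_le_sup_right (sub_le_sub_left (hu.monotone n.le_succ x) (f x)) 0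
  · exact .of_forall fun n => hr.trans_le le_sup_right
  · filter_upwards [hu.eventually_lt x _ (sub_lt_self (f x) hr)] with n hn
    exact max_lt (sub_lt_comm.1 hn) hr

end IsMajorant

namespace HasMajorant

lemma mono (hg : S.HasMajorant g a) (hfg : f ≤ g) (hab : a ≤ b) : S.HasMajorant f b :=
  let ⟨u, hu, hua⟩ := hg
  ⟨u, hu.mono hfg, fun n => (hua n).trans hab⟩

lemma add (hf : S.HasMajorant f a) (hg : S.HasMajorant g b) : S.HasMajorant (f + g) (a + b) := by
  obtain ⟨u, hu, hua⟩ := hf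
  obtain ⟨v, hv, hvb⟩ := hg
  refine ⟨_, hu.add hv, fun n => ?_⟩
  rw [S.I_add (hu.mem n) (hv.mem n)]
  exact add_le_add (hua n) (hvb n)

/-- The Dini argument: continuity of the preintegral is applied to the sequence `(f - u n)⁺`. -/
lemma I_le (h : S.HasMajorant f a) (hf : f ∈ S.L) : S.I f ≤ a := by
  obtain ⟨u, hu, hua⟩ := h
  have hlim := (hu.tendsto_I_posPart_sub hf).const_add a
  rw [add_zero] at hlim
  refine ge_of_tendsto' hlim fun n => ?_
  have hw : (f - u n) ⊔ 0 ∈ S.L := S.sup_mem (sub_mem hf (hu.mem n)) S.zero_mem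
  calc S.I f ≤ S.I (u n + (f - u n) ⊔ 0) :=
        I_mono hf (S.add_mem (hu.mem n) hw) (sub_le_iff_le_add'.1 le_sup_left)
    _ = S.I (u n) + S.I ((f - u n) ⊔ 0) := S.I_add (hu.mem n) hw
    _ ≤ a + S.I ((f - u n) ⊔ 0) := by gcongr; exact hua n

lemma nonneg (h : S.HasMajorant f a) (hf : 0 ≤ f) : 0 ≤ a :=
  S.I_zero ▸ (h.mono hf le_rfl).I_le S.zero_mem

lemma add_nonneg_of_neg (hf : S.HasMajorant f a) (hf_neg : S.HasMajorant (-f) b) : 0 ≤ a + b :=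
  (hf.add hf_neg).nonneg (add_neg_cancel f).ge

/-- Strong subadditivity of the upper integral, from `u ⊔ v + u ⊓ v = u + v`. -/
lemma exists_sup_inf (hf : S.HasMajorant f a) (hg : S.HasMajorant g b) :
    ∃ e, S.HasMajorant (f ⊔ g) e ∧ S.HasMajorant (f ⊓ g) (a + b - e) := by
  obtain ⟨u, hu, hua⟩ := hf
  obtain ⟨v, hv, hvb⟩ := hg
  have hsup := hu.sup hv
  have hinf := hu.inf hv
  have hle (m n : ℕ) : S.I (u m ⊔ v m) ≤ a + b - S.I (u n ⊓ v n) := by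
    let k := max m n
    have hsup_le := I_mono (hsup.mem m) (hsup.mem k) (hsup.monotone (le_max_left m n))
    have hinf_le := I_mono (hinf.mem n) (hinf.mem k) (hinf.monotone (le_max_right m n))
    have hadd : S.I (u k ⊔ v k) + S.I (u k ⊓ v k) = S.I (u k) + S.I (v k) := by
      rw [← S.I_add (hsup.mem k) (hinf.mem k), ← S.I_add (hu.mem k) (hv.mem k),
        add_comm, inf_add_sup]
    linarith [hua k, hvb k]
  have hbdd : BddAbove (Set.range fun m => S.I (u m ⊔ v m)) :=
    ⟨_, Set.forall_mem_range.2 fun m => hle m 0⟩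
  exact ⟨⨆ m, S.I (u m ⊔ v m), ⟨_, hsup, le_ciSup hbdd⟩,
    ⟨_, hinf, fun n => le_sub_comm.1 (ciSup_le fun m => hle m n)⟩⟩

lemma exists_nonneg_majorant (h : S.HasMajorant f a) (hf : 0 ≤ f) :
    ∃ u, S.IsMajorant u f ∧ (∀ n, 0 ≤ u n) ∧ ∀ n, S.I (u n) ≤ a := by
  obtain ⟨u, hu, hua⟩ := h
  have hu' : S.IsMajorant (fun n => u n ⊔ 0) (f ⊔ 0) := hu.sup (.const S.zero_mem)
  refine ⟨_, hu'.mono le_sup_left, fun n => le_sup_right, fun n => ?_⟩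
  refine I_le ⟨u, ⟨hu.mem, hu.monotone, fun x r hr => ?_⟩, hua⟩ (hu'.mem n)
  rcases lt_sup_iff.1 hr with hr | hr
  · filter_upwards [eventually_ge_atTop n] with m hnm
    exact hr.trans_le (hu.monotone hnm x)
  · exact hu.eventually_lt x r (hr.trans_le (hf x))

lemma of_hasSum {d : ℕ → X → ℝ} {α : ℕ → ℝ} (hd : ∀ i, 0 ≤ d i)
    (h : ∀ i, S.HasMajorant (d i) (α i)) (hf : ∀ x, HasSum (fun i => d i x) (f x))
    (hα : HasSum α a) : S.HasMajorant f a := by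
  choose u hu hu_nonneg huα using fun i => (h i).exists_nonneg_majorant (hd i)
  have hmem (m i : ℕ) : u i m ∈ S.L := (hu i).mem m
  have hsum_mono (m : ℕ) {s t : Finset ℕ} (hst : s ⊆ t) : ∑ i ∈ s, u i m ≤ ∑ i ∈ t, u i m :=
    Finset.sum_le_sum_of_subset_of_nonneg hst fun i _ _ => hu_nonneg i m
  refine ⟨fun m => ∑ i ∈ Finset.range m, u i m,
    ⟨fun m => sum_mem (hmem m) _, fun m n hmn => ?_, fun x r hr => ?_⟩, fun m => ?_⟩
  · exact (Finset.sum_le_sum fun i _ => (hu i).monotone hmn).trans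
      (hsum_mono n (Finset.range_mono hmn))
  · obtain ⟨k, hk⟩ := ((hf x).tendsto_sum_nat.eventually_const_lt hr).exists
    filter_upwards [eventually_ge_atTop k,
      (IsMajorant.sum hu (Finset.range k)).eventually_lt x r (by simpa using hk)] with m hkm hm
    exact hm.trans_le (hsum_mono m (Finset.range_mono hkm) x)
  · rw [I_sum (hmem m)]
    exact (Finset.sum_le_sum fun i _ => huα i m).trans
      (sum_le_hasSum _ (fun i _ => (h i).nonneg (hd i)) hα)

end HasMajorant

end Majorants

section UpperIntegral

lemma memLup_iff {G : X → EReal} :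
    MemLup S G ↔ ∃ u : ℕ → X → ℝ,
      (∀ n, u n ∈ S.L) ∧ Monotone u ∧ G = fun x => ⨆ n, (u n x : EReal) := by
  constructor
  · rintro ⟨u, hu, hmono, hlim⟩
    have hmono : Monotone u := monotone_nat_of_le_succ hmono
    refine ⟨u, hu, hmono, funext fun x => (iSup_eq_of_tendsto (fun m n hmn => ?_) (hlim x)).symm⟩
    exact EReal.coe_le_coe (hmono hmn x)
  · rintro ⟨u, hu, hmono, rfl⟩
    exact ⟨u, hu, fun n => hmono n.le_succ,
      fun x => tendsto_atTop_iSup fun m n hmn => EReal.coe_le_coe (hmono hmn x)⟩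

lemma isMajorant_iff {u : ℕ → X → ℝ} :
    S.IsMajorant u f ↔
      (∀ n, u n ∈ S.L) ∧ Monotone u ∧ ∀ x, (f x : EReal) ≤ ⨆ n, (u n x : EReal) := by
  constructor
  · refine fun hu => ⟨hu.mem, hu.monotone, fun x => EReal.ge_of_forall_gt_iff_ge.1 fun r hr => ?_⟩
    obtain ⟨n, hn⟩ := (hu.eventually_lt x r (EReal.coe_lt_coe_iff.1 hr)).exists
    exact le_iSup_of_le n (EReal.coe_le_coe hn.le)
  · rintro ⟨hmem, hmono, hle⟩
    refine ⟨hmem, hmono, fun x r hr => ?_⟩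
    obtain ⟨k, hk⟩ := lt_iSup_iff.1 ((EReal.coe_lt_coe hr).trans_le (hle x))
    filter_upwards [eventually_ge_atTop k] with n hkn
    exact (EReal.coe_lt_coe_iff.1 hk).trans_le (hmono hkn x)

lemma Iup_iSup {u : ℕ → X → ℝ} (hu : ∀ n, u n ∈ S.L) (hmono : Monotone u) :
    Iup S (fun x => ⨆ n, (u n x : EReal)) = ⨆ n, (S.I (u n) : EReal) := by
  apply le_antisymm
  · refine sSup_le ?_
    rintro c ⟨v, hv, hv_mono, hv_lim, hvc⟩
    refine le_of_tendsto' hvc fun n => EReal.le_of_forall_lt_iff_le.1 fun a ha => ?_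
    have hv_le (x : X) : (v n x : EReal) ≤ ⨆ n, (u n x : EReal) :=
      Monotone.ge_of_tendsto (f := fun n => (v n x : EReal))
        (monotone_nat_of_le_succ fun n => EReal.coe_le_coe (hv_mono n x)) (hv_lim x) n
    have hua (m : ℕ) : S.I (u m) ≤ a :=
      EReal.coe_le_coe_iff.1 ((le_iSup (fun n => (S.I (u n) : EReal)) m).trans ha.le)
    exact EReal.coe_le_coe (HasMajorant.I_le ⟨u, isMajorant_iff.2 ⟨hu, hmono, hv_le⟩, hua⟩ (hv n))
  · refine le_sSup ⟨u, hu, fun n => hmono n.le_succ, fun x => ?_, ?_⟩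
    · exact tendsto_atTop_iSup fun m n hmn => EReal.coe_le_coe (hmono hmn x)
    · exact tendsto_atTop_iSup fun m n hmn => EReal.coe_le_coe (I_mono (hu m) (hu n) (hmono hmn))

lemma HasMajorant.upperInt_le (h : S.HasMajorant f a) :
    upperInt S (fun x => (f x : EReal)) ≤ a := by
  obtain ⟨u, hu, hua⟩ := h
  obtain ⟨hmem, hmono, hle⟩ := isMajorant_iff.1 hu
  calc upperInt S (fun x => (f x : EReal)) ≤ Iup S fun x => ⨆ n, (u n x : EReal) :=
        sInf_le ⟨_, ⟨memLup_iff.2 ⟨u, hmem, hmono, rfl⟩, hle⟩, rfl⟩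
    _ = ⨆ n, (S.I (u n) : EReal) := Iup_iSup hmem hmono
    _ ≤ a := iSup_le fun n => EReal.coe_le_coe (hua n)

lemma hasMajorant_of_upperInt_lt (h : upperInt S (fun x => (f x : EReal)) < a) :
    S.HasMajorant f a := by
  obtain ⟨_, ⟨G, ⟨hG, hle⟩, rfl⟩, hlt⟩ := sInf_lt_iff.1 h
  obtain ⟨u, hu, hmono, rfl⟩ := memLup_iff.1 hG
  rw [Iup_iSup hu hmono] at hlt
  exact ⟨u, isMajorant_iff.2 ⟨hu, hmono, hle⟩, fun n =>
    EReal.coe_le_coe_iff.1 ((le_iSup (fun n => (S.I (u n) : EReal)) n).trans hlt.le)⟩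

lemma exists_hasMajorant_of_upperInt_ne_top (h : upperInt S (fun x => (f x : EReal)) ≠ ⊤) :
    ∃ a, S.HasMajorant f a := by
  obtain ⟨a, ha, -⟩ := EReal.lt_iff_exists_real_btwn.1 h.lt_top
  exact ⟨a, hasMajorant_of_upperInt_lt ha⟩

lemma upperInt_le_coe_iff :
    upperInt S (fun x => (f x : EReal)) ≤ c ↔ ∀ a > c, S.HasMajorant f a :=
  ⟨fun h _ ha => hasMajorant_of_upperInt_lt (h.trans_lt (EReal.coe_lt_coe ha)),
    fun h => EReal.le_of_forall_lt_iff_le.1 fun a ha =>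
      (h a (EReal.coe_lt_coe_iff.1 ha)).upperInt_le⟩

lemma lowerInt_eq_neg_upperInt_neg (S : IntegralSystem X) (f : X → EReal) :
    lowerInt S f = -upperInt S fun x => -f x := by
  apply le_antisymm
  · refine sSup_le ?_
    rintro _ ⟨G, ⟨hG, hle⟩, rfl⟩
    exact EReal.neg_le_neg_iff.2 (sInf_le ⟨_, ⟨hG, fun x => EReal.neg_le_neg_iff.2 (hle x)⟩, rfl⟩)
  · rw [EReal.neg_le]
    refine le_sInf ?_
    rintro _ ⟨G, ⟨hG, hle⟩, rfl⟩
    rw [EReal.neg_le]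
    refine le_sSup ⟨fun x => -G x, ⟨?_, fun x => EReal.neg_le.1 (hle x)⟩, ?_⟩
    · simpa only [MemLdown, neg_neg] using hG
    · simp only [Idown, neg_neg]

end UpperIntegral

section Integral

/-- `f` is `I`-integrable with `I¹ f = c`, expressed through majorants of `f` and of `-f`. -/
structure HasIntegral (S : IntegralSystem X) (f : X → ℝ) (c : ℝ) : Prop where
  hasMajorant : ∀ a > c, S.HasMajorant f a
  hasMajorant_neg : ∀ a > -c, S.HasMajorant (-f) a

namespace HasIntegral

lemma neg (h : S.HasIntegral f c) : S.HasIntegral (-f) (-c) where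
  hasMajorant := h.hasMajorant_neg
  hasMajorant_neg := by simpa only [neg_neg] using h.hasMajorant

lemma le_of_hasMajorant (hf : S.HasIntegral f c) (hg : S.HasMajorant g a) (hfg : f ≤ g) :
    c ≤ a := by
  refine neg_le_neg_iff.1 (le_of_forall_gt_imp_ge_of_dense fun b hb => ?_)
  exact neg_le_iff_add_nonneg'.2 ((hg.mono hfg le_rfl).add_nonneg_of_neg (hf.hasMajorant_neg b hb))

lemma mono (hf : S.HasIntegral f c) (hg : S.HasIntegral g d) (hfg : f ≤ g) : c ≤ d :=
  le_of_forall_gt_imp_ge_of_dense fun a ha => hf.le_of_hasMajorant (hg.hasMajorant a ha) hfg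

lemma upperInt_eq (h : S.HasIntegral f c) : upperInt S (fun x => (f x : EReal)) = c := by
  refine le_antisymm (upperInt_le_coe_iff.2 h.hasMajorant) ?_
  refine EReal.le_of_forall_lt_iff_le.1 fun a ha => ?_
  exact EReal.coe_le_coe (h.le_of_hasMajorant (hasMajorant_of_upperInt_lt ha) le_rfl)

lemma integrable1 (h : S.HasIntegral f c) : Integrable1 S f := by
  refine ⟨c, ?_, h.upperInt_eq⟩
  simpa only [lowerInt_eq_neg_upperInt_neg, Pi.neg_apply, EReal.coe_neg, neg_neg] using
    congrArg (-·) h.neg.upperInt_eq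

lemma int1_eq (h : S.HasIntegral f c) : Int1 S f = c := by
  rw [Int1, h.upperInt_eq, EReal.toReal_coe]

end HasIntegral

lemma _root_.Integrable1.hasIntegral (h : Integrable1 S f) : S.HasIntegral f (Int1 S f) := by
  obtain ⟨c, hlower, hupper⟩ := h
  rw [Int1, hupper, EReal.toReal_coe]
  rw [lowerInt_eq_neg_upperInt_neg, neg_eq_iff_eq_neg] at hlower
  exact ⟨upperInt_le_coe_iff.1 hupper.le, upperInt_le_coe_iff.1 hlower.le⟩

lemma exists_hasIntegral
    (h : ∀ ε > 0, ∃ a b, S.HasMajorant f a ∧ S.HasMajorant (-f) b ∧ a + b < ε) :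
    ∃ c, S.HasIntegral f c := by
  obtain ⟨a₀, b₀, ha₀, hb₀, -⟩ := h 1 one_pos
  have hbdd : BddBelow {a | S.HasMajorant f a} :=
    ⟨-b₀, fun a ha => neg_le_iff_add_nonneg.2 (ha.add_nonneg_of_neg hb₀)⟩
  refine ⟨sInf {a | S.HasMajorant f a}, fun a ha => ?_, fun b hb => ?_⟩
  · obtain ⟨a', ha', hlt⟩ := exists_lt_of_csInf_lt ⟨a₀, ha₀⟩ ha
    exact ha'.mono le_rfl hlt.le
  · obtain ⟨a', b', ha', hb', hlt⟩ := h _ (neg_lt_iff_pos_add.1 hb)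
    exact hb'.mono le_rfl (by linarith [csInf_le hbdd ha'])

lemma HasIntegral.exists_sup (hf : S.HasIntegral f c) (hg : S.HasIntegral g d) :
    ∃ e, S.HasIntegral (f ⊔ g) e := by
  refine exists_hasIntegral fun ε hε => ?_
  have hlt (t : ℝ) : t < t + ε / 5 := by linarith
  obtain ⟨p, hsup, hinf⟩ :=
    (hf.hasMajorant _ (hlt c)).exists_sup_inf (hg.hasMajorant _ (hlt d))
  obtain ⟨q, hneg_inf, hneg_sup⟩ :=
    (hf.hasMajorant_neg _ (hlt (-c))).exists_sup_inf (hg.hasMajorant_neg _ (hlt (-d)))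
  rw [← neg_inf] at hneg_inf
  rw [← neg_sup] at hneg_sup
  exact ⟨_, _, hsup, hneg_sup, by linarith [hinf.add_nonneg_of_neg hneg_inf]⟩

end Integral

section Convergence

variable {p : ℕ → X → ℝ} {α : ℕ → ℝ}

lemma HasIntegral.of_monotone (hp : ∀ n, S.HasIntegral (p n) (α n)) (hmono : Monotone p)
    (hf : ∀ x, Tendsto (fun n => p n x) atTop (𝓝 (f x))) (hα : Tendsto α atTop (𝓝 c)) :
    S.HasIntegral f c := by
  have hmono_at (x : X) : Monotone fun n => p n x := fun _ _ hmn => hmono hmn x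
  have hα_mono : Monotone α := fun m n hmn => (hp m).mono (hp n) (hmono hmn)
  constructor
  · intro a ha
    let δ := (a - c) / 2
    have hδ : 0 < δ := half_pos (sub_pos.2 ha)
    have hincr (n : ℕ) : S.HasMajorant (p (n + 1) - p n) (α (n + 1) - α n + δ / 2 / 2 ^ n) := by
      have hη : 0 < δ / 2 / 2 ^ n / 2 := by positivity
      rw [sub_eq_add_neg (p (n + 1))]
      exact (((hp (n + 1)).hasMajorant _ (lt_add_of_pos_right _ hη)).add
        ((hp n).hasMajorant_neg _ (lt_add_of_pos_right _ hη))).mono le_rfl (by linarith)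
    have hrest : S.HasMajorant (f - p 0) (c - α 0 + δ) :=
      .of_hasSum (fun n => sub_nonneg.2 (hmono n.le_succ)) hincr
        (fun x => hasSum_sub_of_monotone_of_tendsto (hmono_at x) (hf x))
        ((hasSum_sub_of_monotone_of_tendsto hα_mono hα).add (hasSum_geometric_two' δ))
    refine (((hp 0).hasMajorant _ (lt_add_of_pos_right _ hδ)).add hrest).mono ?_ ?_
    · rw [add_sub_cancel]
    · simp only [δ]
      linarith
  · intro a ha
    obtain ⟨n, hn⟩ := (hα.neg.eventually_lt_const ha).exists
    exact ((hp n).hasMajorant_neg a hn).mono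
      (fun x => neg_le_neg ((hmono_at x).ge_of_tendsto (hf x) n)) le_rfl

lemma HasIntegral.of_antitone (hp : ∀ n, S.HasIntegral (p n) (α n)) (hanti : Antitone p)
    (hf : ∀ x, Tendsto (fun n => p n x) atTop (𝓝 (f x))) (hα : Tendsto α atTop (𝓝 c)) :
    S.HasIntegral f c := by
  have hneg : S.HasIntegral (-f) (-c) :=
    .of_monotone (fun n => (hp n).neg) hanti.neg (fun x => (hf x).neg) hα.neg
  simpa only [neg_neg] using hneg.neg

lemma HasIntegral.exists_partialSups (hp : ∀ n, S.HasIntegral (p n) (α n)) (n : ℕ) :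
    ∃ e, S.HasIntegral (partialSups p n) e := by
  induction n with
  | zero => exact ⟨α 0, by simpa only [partialSups_zero] using hp 0⟩
  | succ n ih =>
    obtain ⟨e, he⟩ := ih
    simpa only [partialSups_add_one] using he.exists_sup (hp (n + 1))

lemma HasIntegral.exists_iSup (hp : ∀ n, S.HasIntegral (p n) (α n)) (hg : S.HasMajorant g a)
    (hpg : ∀ n, p n ≤ g) : ∃ e, S.HasIntegral (fun x => ⨆ n, p n x) e := by
  choose β hβ using HasIntegral.exists_partialSups hp
  have hmono : Monotone (partialSups p) := (partialSups p).monotone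
  have hβ_mono : Monotone β := fun m n hmn => (hβ m).mono (hβ n) (hmono hmn)
  have hβ_bdd : BddAbove (Set.range β) :=
    ⟨a, Set.forall_mem_range.2 fun n =>
      (hβ n).le_of_hasMajorant hg (partialSups_le p n g fun k _ => hpg k)⟩
  refine ⟨⨆ n, β n, .of_monotone hβ hmono (fun x => ?_) (tendsto_atTop_ciSup hβ_mono hβ_bdd)⟩
  have hbdd : BddAbove (Set.range fun n => p n x) := ⟨g x, Set.forall_mem_range.2 fun n => hpg n x⟩
  simp only [Pi.partialSups_apply]
  rw [← ciSup_partialSups_eq hbdd]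
  exact tendsto_atTop_ciSup (partialSups _).monotone (bddAbove_range_partialSups.2 hbdd)

lemma HasIntegral.exists_iInf (hp : ∀ n, S.HasIntegral (p n) (α n)) (hg : S.HasMajorant g a)
    (hpg : ∀ n, -p n ≤ g) : ∃ e, S.HasIntegral (fun x => ⨅ n, p n x) e := by
  obtain ⟨e, he⟩ := HasIntegral.exists_iSup (fun n => (hp n).neg) hg hpg
  simp only [iInf_eq_neg_iSup_neg]
  exact ⟨-e, he.neg⟩

lemma HasIntegral.abs_le (hf : S.HasIntegral f c) (hg : S.HasMajorant g a)
    (hfg : ∀ x, |f x| ≤ g x) : |c| ≤ a :=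
  abs_le'.2 ⟨hf.le_of_hasMajorant hg fun x => (le_abs_self _).trans (hfg x),
    hf.neg.le_of_hasMajorant hg fun x => (neg_le_abs _).trans (hfg x)⟩

lemma HasIntegral.isBoundedUnder (hp : ∀ n, S.HasIntegral (p n) (α n)) (hg : S.HasMajorant g a)
    (hpg : ∀ n x, |p n x| ≤ g x) :
    IsBoundedUnder (· ≤ ·) atTop α ∧ IsBoundedUnder (· ≥ ·) atTop α :=
  isBoundedUnder_le_abs.1 (isBoundedUnder_of ⟨a, fun n => (hp n).abs_le hg (hpg n)⟩)

lemma HasIntegral.exists_limsup (hp : ∀ n, S.HasIntegral (p n) (α n)) (hg : S.HasMajorant g a)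
    (hpg : ∀ n x, |p n x| ≤ g x) :
    ∃ e, S.HasIntegral (fun x => limsup (fun n => p n x) atTop) e ∧ limsup α atTop ≤ e := by
  have hle (n : ℕ) : p n ≤ g := fun x => (le_abs_self _).trans (hpg n x)
  have habove (x : X) : BddAbove (Set.range fun n => p n x) :=
    ⟨g x, Set.forall_mem_range.2 fun n => hle n x⟩
  have hbelow (x : X) : BddBelow (Set.range fun n => p n x) :=
    ⟨-g x, Set.forall_mem_range.2 fun n => (_root_.abs_le.1 (hpg n x)).1⟩
  let tail (k : ℕ) (x : X) : ℝ := ⨆ n, p (n + k) x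
  have htail_anti : Antitone tail := fun k l hkl x => antitone_ciSup_nat_add (habove x) hkl
  have hle_tail (k : ℕ) : p k ≤ tail k := fun x =>
    le_ciSup_of_le ((habove x).mono (Set.range_comp_subset_range (· + k) fun n => p n x)) 0
      (by rw [zero_add])
  choose β hβ using fun k =>
    HasIntegral.exists_iSup (fun n => hp (n + k)) hg fun n => hle (n + k)
  have hαβ (k : ℕ) : α k ≤ β k := (hp k).mono (hβ k) (hle_tail k)
  have hα_ge (k : ℕ) : -a ≤ α k := (_root_.abs_le.1 ((hp k).abs_le hg (hpg k))).1
  have hβ_lim : Tendsto β atTop (𝓝 (⨅ k, β k)) :=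
    tendsto_atTop_ciInf (fun k l hkl => (hβ l).mono (hβ k) (htail_anti hkl))
      ⟨-a, Set.forall_mem_range.2 fun k => (hα_ge k).trans (hαβ k)⟩
  refine ⟨⨅ k, β k, .of_antitone hβ htail_anti
    (fun x => tendsto_ciSup_nat_add_limsup (habove x) (hbelow x)) hβ_lim, ?_⟩
  rw [← hβ_lim.limsup_eq]
  exact limsup_le_limsup (.of_forall hαβ) (isBoundedUnder_of ⟨-a, hα_ge⟩).isCoboundedUnder_le
    hβ_lim.isBoundedUnder_le

lemma HasIntegral.exists_liminf (hp : ∀ n, S.HasIntegral (p n) (α n)) (hg : S.HasMajorant g a)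
    (hpg : ∀ n x, |p n x| ≤ g x) :
    ∃ e, S.HasIntegral (fun x => liminf (fun n => p n x) atTop) e ∧ e ≤ liminf α atTop := by
  obtain ⟨e, he, hαe⟩ := HasIntegral.exists_limsup (fun n => (hp n).neg) hg
    fun n x => (abs_neg (p n x)).trans_le (hpg n x)
  simp only [liminf_eq_neg_limsup_neg]
  exact ⟨-e, he.neg, neg_le_neg hαe⟩

lemma HasIntegral.exists_tendsto (hp : ∀ n, S.HasIntegral (p n) (α n)) (hg : S.HasMajorant g a)
    (hpg : ∀ n x, |p n x| ≤ g x) (hf : ∀ x, Tendsto (fun n => p n x) atTop (𝓝 (f x))) :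
    ∃ e, S.HasIntegral f e ∧ Tendsto α atTop (𝓝 e) := by
  obtain ⟨e, he, hle⟩ := HasIntegral.exists_liminf hp hg hpg
  obtain ⟨e', he', hge⟩ := HasIntegral.exists_limsup hp hg hpg
  simp only [fun x => (hf x).liminf_eq] at he
  simp only [fun x => (hf x).limsup_eq] at he'
  obtain ⟨habove, hbelow⟩ := HasIntegral.isBoundedUnder hp hg hpg
  exact ⟨e, he, tendsto_of_le_liminf_of_limsup_le hle (hge.trans (he'.mono he le_rfl))
    habove hbelow⟩

end Convergence

end IntegralSystem

open IntegralSystem in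
theorem daniell_dominated_convergence_general (S : IntegralSystem X) (f : ℕ → X → ℝ) (g : X → ℝ)
    (hf : ∀ n, Integrable1 S (f n))
    (hg : upperInt S (fun x => (g x : EReal)) ≠ ⊤) (hdom : ∀ n x, |f n x| ≤ g x) :
    Integrable1 S (fun x => ⨅ n, f n x) ∧
    Integrable1 S (fun x => ⨆ n, f n x) ∧
    Integrable1 S (fun x => liminf (fun n => f n x) atTop) ∧
    Integrable1 S (fun x => limsup (fun n => f n x) atTop) ∧
    Int1 S (fun x => liminf (fun n => f n x) atTop) ≤ liminf (fun n => Int1 S (f n)) atTop ∧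
    liminf (fun n => Int1 S (f n)) atTop ≤ limsup (fun n => Int1 S (f n)) atTop ∧
    limsup (fun n => Int1 S (f n)) atTop ≤ Int1 S (fun x => limsup (fun n => f n x) atTop) ∧
    (∀ F : X → ℝ, (∀ x, Tendsto (fun n => f n x) atTop (𝓝 (F x))) →
      Integrable1 S F ∧ Tendsto (fun n => Int1 S (f n)) atTop (𝓝 (Int1 S F))) := by
  obtain ⟨a, hga⟩ := exists_hasMajorant_of_upperInt_ne_top hg
  have hI (n : ℕ) := (hf n).hasIntegral
  obtain ⟨_, hinf⟩ := HasIntegral.exists_iInf hI hga fun n x => (neg_le_abs _).trans (hdom n x)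
  obtain ⟨_, hsup⟩ := HasIntegral.exists_iSup hI hga fun n x => (le_abs_self _).trans (hdom n x)
  obtain ⟨_, hliminf, hliminf_le⟩ := HasIntegral.exists_liminf hI hga hdom
  obtain ⟨_, hlimsup, hle_limsup⟩ := HasIntegral.exists_limsup hI hga hdom
  obtain ⟨habove, hbelow⟩ := HasIntegral.isBoundedUnder hI hga hdom
  refine ⟨hinf.integrable1, hsup.integrable1, hliminf.integrable1, hlimsup.integrable1,
    hliminf.int1_eq.trans_le hliminf_le, liminf_le_limsup habove hbelow,
    hle_limsup.trans_eq hlimsup.int1_eq.symm, fun F hF => ?_⟩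
  obtain ⟨_, hF_int, hlim⟩ := HasIntegral.exists_tendsto hI hga hdom hF
  exact ⟨hF_int.integrable1, hF_int.int1_eq ▸ hlim⟩

/-- Dominated convergence theorem for the Daniell extension. -/
theorem daniell_dominated_convergence (S : IntegralSystem X) (f : ℕ → X → ℝ) (g : X → ℝ)
    (hf : ∀ n, Integrable1 S (f n)) (hg : Integrable1 S g)
    (hdom : ∀ n x, |f n x| ≤ g x) :
    Integrable1 S (fun x => ⨅ n, f n x) ∧
    Integrable1 S (fun x => ⨆ n, f n x) ∧
    Integrable1 S (fun x => liminf (fun n => f n x) atTop) ∧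
    Integrable1 S (fun x => limsup (fun n => f n x) atTop) ∧
    Int1 S (fun x => liminf (fun n => f n x) atTop) ≤ liminf (fun n => Int1 S (f n)) atTop ∧
    liminf (fun n => Int1 S (f n)) atTop ≤ limsup (fun n => Int1 S (f n)) atTop ∧
    limsup (fun n => Int1 S (f n)) atTop ≤ Int1 S (fun x => limsup (fun n => f n x) atTop) ∧
    (∀ F : X → ℝ, (∀ x, Tendsto (fun n => f n x) atTop (𝓝 (F x))) →
      Integrable1 S F ∧ Tendsto (fun n => Int1 S (f n)) atTop (𝓝 (Int1 S F))) := by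
  obtain ⟨c, -, hc⟩ := hg
  exact daniell_dominated_convergence_general S f g hf (hc ▸ EReal.coe_ne_top c) hdom
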